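/- Let J be a connected graph with at least 4 vertices and let X ⊆ V(J) with |X| ≤ 2.ct Suppose there do not exist independent (≤2)-separations (A,B) and (C,D) of J with |V(A)| ≤ 3, |V(C)| ≤ 3, and X ⊆ V(B) ∩ V(D). Let S := {s ∈ V(J) \ X : deg_J(s) ≤ 2}. Then |S| ≤ 2, and if |S| = 2 then the two vertices of S are adjacent in J. -/

import Mathlib

open SimpleGraph

/-- `(A, B)` is a `k`-separation of `H`: edge-disjoint subgraphs whose union is `H`,
with `V(A) \ V(B)` and `V(B) \ V(A)` nonempty and `|V(A) ∩ V(B)| = k`. -/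
def IsSeparation {V : Type*} (H : SimpleGraph V) (A B : H.Subgraph) (k : ℕ) : Prop :=
  Disjoint A.edgeSet B.edgeSet ∧ A ⊔ B = ⊤ ∧
    (A.verts \ B.verts).Nonempty ∧ (B.verts \ A.verts).Nonempty ∧
    (A.verts ∩ B.verts).ncard = k

/-- `(A, B)` is a `(≤2)`-separation of `H`. -/
def IsSepLE2 {V : Type*} (H : SimpleGraph V) (A B : H.Subgraph) : Prop :=
  ∃ k ≤ 2, IsSeparation H A B k

/-- The edge set of `A⁻`: the edges of `A` except those joining two vertices
of `V(A) ∩ V(B)`. -/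
def sepMinusEdges {V : Type*} {H : SimpleGraph V} (A B : H.Subgraph) : Set (Sym2 V) :=
  {e | e ∈ A.edgeSet ∧ ¬ ∀ v ∈ e, v ∈ A.verts ∩ B.verts}

/-- Separations `(A,B)` and `(C,D)` are independent. -/
def IndepSeps {V : Type*} {H : SimpleGraph V} (A B C D : H.Subgraph) : Prop :=
  sepMinusEdges A B ∩ sepMinusEdges C D = ∅ ∧
    (A.verts \ B.verts) ∩ (C.verts \ D.verts) = ∅

/-- `β(T)`: the maximum size of a stable set in the subgraph of `T` induced by the
vertices of degree at most 2. -/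
noncomputable def beta {V : Type*} (T : SimpleGraph V) : ℕ :=
  sSup {n | ∃ S : Set V, S.ncard = n ∧ (∀ v ∈ S, (T.neighborSet v).ncard ≤ 2) ∧
    (∀ u ∈ S, ∀ w ∈ S, ¬ T.Adj u w)}

/-- The star at `x`. -/
def starSub {V : Type*} (J : SimpleGraph V) (x : V) : J.Subgraph where
  verts := insert x (J.neighborSet x)
  Adj u v := J.Adj u v ∧ (u = x ∨ v = x)
  adj_sub h := h.1
  edge_vert := by
    rintro u v ⟨h, rfl | rfl⟩
    · exact Set.mem_insert _ _
    · exact Set.mem_insert_of_mem _ h.symm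
  symm := ⟨fun _ _ h => ⟨h.1.symm, h.2.symm⟩⟩

/-- The graph with `x` removed. -/
def delSub {V : Type*} (J : SimpleGraph V) (x : V) : J.Subgraph where
  verts := {x}ᶜ
  Adj u v := J.Adj u v ∧ u ≠ x ∧ v ≠ x
  adj_sub h := h.1
  edge_vert h := h.2.1
  symm := ⟨fun _ _ h => ⟨h.1.symm, h.2.2, h.2.1⟩⟩

theorem star_card {V : Type*} [Fintype V] (J : SimpleGraph V) (x : V)
    (hx : (J.neighborSet x).ncard ≤ 2) : (starSub J x).verts.ncard ≤ 3 := by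
  have := Set.ncard_insert_le x (J.neighborSet x)
  simp only [starSub]
  omega

theorem star_sep {V : Type*} [Fintype V] (J : SimpleGraph V) (hcard : 4 ≤ Fintype.card V) (x : V)
    (hx : (J.neighborSet x).ncard ≤ 2) : IsSepLE2 J (starSub J x) (delSub J x) := by
  have hint : (starSub J x).verts ∩ (delSub J x).verts = J.neighborSet x := by
    ext v
    simp only [starSub, delSub, Set.mem_inter_iff, Set.mem_insert_iff, Set.mem_compl_iff,
      Set.mem_singleton_iff, mem_neighborSet]
    constructor
    · tauto
    · exact fun h => ⟨Or.inr h, h.ne'⟩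
  refine ⟨_, hx, ?_, ?_, ?_, ?_, by rw [hint]⟩
  · rw [Set.disjoint_left]
    intro e
    induction e with
    | h u v =>
      simp only [Subgraph.mem_edgeSet, starSub, delSub]
      tauto
  · apply Subgraph.ext
    · ext v
      simp only [starSub, delSub, Subgraph.verts_sup, Subgraph.verts_top, Set.mem_union,
        Set.mem_insert_iff, Set.mem_compl_iff, Set.mem_singleton_iff, Set.mem_univ, iff_true]
      tauto
    · ext u v
      simp only [starSub, delSub, Subgraph.sup_adj, Subgraph.top_adj]
      tauto
  · exact ⟨x, by simp [starSub, delSub]⟩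
  · by_contra hne
    have hall : (starSub J x).verts = Set.univ := by
      ext v
      simp only [Set.mem_univ, iff_true]
      by_contra hv
      apply hne
      refine ⟨v, ?_, hv⟩
      rintro rfl
      exact hv (Set.mem_insert _ _)
    have h3 := star_card J x hx
    rw [hall, Set.ncard_univ, Nat.card_eq_fintype_card] at h3
    omega

theorem star_indep {V : Type*} (J : SimpleGraph V) (x y : V) (hxy : x ≠ y)
    (hadj : ¬ J.Adj x y) :
    IndepSeps (starSub J x) (delSub J x) (starSub J y) (delSub J y) := by
  have hadj' : ¬ J.Adj y x := fun h => hadj h.symm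
  constructor
  · rw [Set.eq_empty_iff_forall_notMem]
    rintro e ⟨⟨h1, -⟩, ⟨h2, -⟩⟩
    induction e with
    | h u v =>
      simp only [Subgraph.mem_edgeSet, starSub] at h1 h2
      obtain ⟨h, h1⟩ := h1
      obtain ⟨-, h2⟩ := h2
      rcases h1 with rfl | rfl <;> rcases h2 with rfl | rfl <;> first | contradiction | exact hxy rfl
  · rw [Set.eq_empty_iff_forall_notMem]
    rintro v ⟨⟨-, h1⟩, ⟨-, h2⟩⟩
    simp only [delSub, Set.mem_compl_iff, Set.mem_singleton_iff, not_not] at h1 h2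
    exact hxy (h1.symm.trans h2)

theorem nbrs_of_two {V : Type*} [Fintype V] (J : SimpleGraph V) (a b c : V) (hbc : b ≠ c)
    (hab : J.Adj a b) (hac : J.Adj a c) (ha : (J.neighborSet a).ncard ≤ 2) (v : V)
    (hv : J.Adj a v) : v = b ∨ v = c := by
  have hsub : ({b, c} : Set V) ⊆ J.neighborSet a := by
    rintro w (rfl | rfl)
    · exact hab
    · exact hac
  have heq := Set.eq_of_subset_of_ncard_le hsub (by rw [Set.ncard_pair hbc]; exact ha)
    (Set.toFinite _)
  have : v ∈ ({b, c} : Set V) := by rw [heq]; exact hv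
  simpa using this

/-- Let `J` be a connected graph with at least 4 vertices and `X` a set of at most 2 vertices.
If there are no independent `(≤2)`-separations `(A,B)`, `(C,D)` of `J` with `|V(A)| ≤ 3`,
`|V(C)| ≤ 3` and `X ⊆ V(B) ∩ V(D)`, then the set `S` of vertices outside `X` of degree at
most 2 has size at most 2, and if it has two elements they are adjacent. -/
theorem stmt4 {V : Type*} [Fintype V] (J : SimpleGraph V) (hconn : J.Connected)
    (hcard : 4 ≤ Fintype.card V) (X : Set V) (hX : X.ncard ≤ 2)
    (hnoflaps : ¬ ∃ A B C D : J.Subgraph, IsSepLE2 J A B ∧ IsSepLE2 J C D ∧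
      A.verts.ncard ≤ 3 ∧ C.verts.ncard ≤ 3 ∧ IndepSeps A B C D ∧
      X ⊆ B.verts ∩ D.verts) :
    {s : V | s ∉ X ∧ (J.neighborSet s).ncard ≤ 2}.ncard ≤ 2 ∧
    (∀ x ∈ {s : V | s ∉ X ∧ (J.neighborSet s).ncard ≤ 2},
      ∀ y ∈ {s : V | s ∉ X ∧ (J.neighborSet s).ncard ≤ 2}, x ≠ y → J.Adj x y) := by
  have hcl : ∀ x ∈ {s : V | s ∉ X ∧ (J.neighborSet s).ncard ≤ 2},
      ∀ y ∈ {s : V | s ∉ X ∧ (J.neighborSet s).ncard ≤ 2}, x ≠ y → J.Adj x y := by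
    rintro x ⟨hxX, hx⟩ y ⟨hyX, hy⟩ hxy
    by_contra hadj
    refine hnoflaps ⟨starSub J x, delSub J x, starSub J y, delSub J y, star_sep J hcard x hx,
      star_sep J hcard y hy, star_card J x hx, star_card J y hy, star_indep J x y hxy hadj, ?_⟩
    intro v hv
    constructor
    · rintro rfl
      exact hxX hv
    · rintro rfl
      exact hyX hv
  refine ⟨?_, hcl⟩
  by_contra hlt
  obtain ⟨a, b, c, ha, hb, hc, hab, hac, hbc⟩ :=
    (Set.two_lt_ncard_iff (Set.toFinite _)).1 (not_le.1 hlt)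
  have jab := hcl a ha b hb hab
  have jac := hcl a ha c hc hac
  have jbc := hcl b hb c hc hbc
  have hclosed : ∀ u v, J.Adj u v → u ∈ ({a, b, c} : Set V) → v ∈ ({a, b, c} : Set V) := by
    rintro u v huv (rfl | rfl | rfl)
    · rcases nbrs_of_two J _ b c hbc jab jac ha.2 v huv with rfl | rfl <;> simp
    · rcases nbrs_of_two J _ a c hac jab.symm jbc hb.2 v huv with rfl | rfl <;> simp
    · rcases nbrs_of_two J _ a b hab jac.symm jbc.symm hc.2 v huv with rfl | rfl <;> simp
  have hwalk : ∀ u v, J.Walk u v → u ∈ ({a, b, c} : Set V) → v ∈ ({a, b, c} : Set V) := by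
    intro u v p
    induction p with
    | nil => exact id
    | cons h _ ih => exact fun hu => ih (hclosed _ _ h hu)
  have hall : ({a, b, c} : Set V) = Set.univ := by
    ext v
    simp only [Set.mem_univ, iff_true]
    obtain ⟨p⟩ := hconn.preconnected a v
    exact hwalk a v p (by simp)
  have h1 := Set.ncard_insert_le a ({b, c} : Set V)
  rw [hall, Set.ncard_univ, Nat.card_eq_fintype_card, Set.ncard_pair hbc] at h1
  omega
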